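/- arXiv:2001.02906 — 6 statements merged into one kernel-verified Lean document; each statement's English description precedes it below -/
import Mathlib

section
/- Let n ≥ 1 and m ≥ 1 be integers, let c(1),…,c(n) be nonnegative reals and B(1),…,B(m) be nonnegative reals with ∑_{i=1}^{n} c(i) ≤ ∑_{r=1}^{m} B(r). Then there exist natural numbers 0 = e(0) ≤ e(1) ≤ … ≤ e(m) = n such that for every r ∈ {1,…,m}: ∑_{i=e(r−1)+1}^{e(r)} c(i) ≤ B(r) + max_{1≤i≤n} c(i). (This is the greedy block-allocation step underlying the construction of an integer solution from an optimal solution in Theorem 1.) -/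
/-!
Write `P k` for the coverage time of the first `k` modules and `S r` for the total budget of the
first `r` robots. For `r ≥ 1` let `e r` be the largest `k ≤ n` with `P k ≤ S r`; the hypothesis
`P n ≤ S m` gives `e m = n`. If `e (r - 1) < n`, maximality gives
`S (r - 1) < P (e (r - 1) + 1) ≤ P (e (r - 1)) + max c`, and subtracting this from `P (e r) ≤ S r`
bounds block `r` by `B r + max c`. If `e (r - 1) = n`, block `r` is empty.
-/

/-- Greedy block-allocation: if the total coverage time of the `n` modules is at
most the total coverage budget of the `m` robots, then the modules can be split
into `m` consecutive (possibly empty) blocks, block `r` being `{e (r-1)+1, …, e r}`,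
such that the coverage time of each block exceeds the corresponding budget `B r`
by at most the largest single-module coverage time. -/
theorem greedy_block_allocation (n m : ℕ) (hn : 1 ≤ n) (hm : 1 ≤ m)
    (c B : ℕ → ℝ)
    (hc : ∀ i ∈ Finset.Icc 1 n, 0 ≤ c i)
    (hB : ∀ r ∈ Finset.Icc 1 m, 0 ≤ B r)
    (hsum : (∑ i ∈ Finset.Icc 1 n, c i) ≤ ∑ r ∈ Finset.Icc 1 m, B r) :
    ∃ e : ℕ → ℕ, e 0 = 0 ∧ e m = n ∧ (∀ r, r < m → e r ≤ e (r + 1)) ∧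
      ∀ r ∈ Finset.Icc 1 m,
        (∑ i ∈ Finset.Icc (e (r - 1) + 1) (e r), c i) ≤
          B r + (Finset.Icc 1 n).sup' (Finset.nonempty_Icc.mpr hn) c := by
  classical
  set M := (Finset.Icc 1 n).sup' (Finset.nonempty_Icc.mpr hn) c with hM
  have hcM : ∀ i ∈ Finset.Icc 1 n, c i ≤ M := fun i hi => Finset.le_sup' c hi
  have h1 : 1 ∈ Finset.Icc 1 n := by simp [hn]
  have hM0 : 0 ≤ M := (hc 1 h1).trans (hcM 1 h1)
  let P : ℕ → ℝ := fun k => ∑ i ∈ Finset.Icc 1 k, c i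
  let S : ℕ → ℝ := fun r => ∑ i ∈ Finset.Icc 1 r, B i
  have hP0 : P 0 = 0 := by simp [P]
  have hS0 : S 0 = 0 := by simp [S]
  have hPs : ∀ k, P (k + 1) = P k + c (k + 1) := fun k =>
    Finset.sum_Icc_succ_top (by omega) c
  have hSs : ∀ r, S (r + 1) = S r + B (r + 1) := fun r =>
    Finset.sum_Icc_succ_top (by omega) B
  have hblock : ∀ a b, a ≤ b → ∑ i ∈ Finset.Icc (a + 1) b, c i = P b - P a := by
    intro a b hab
    induction b, hab using Nat.le_induction with
    | base => simp
    | succ b hab ih =>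
      rw [Finset.sum_Icc_succ_top (by omega) c, ih, hPs]
      ring
  have hSnonneg : ∀ r, r ≤ m → 0 ≤ S r := fun r hr =>
    Finset.sum_nonneg fun i hi => hB i (by simp only [Finset.mem_Icc] at hi ⊢; omega)
  let g : ℕ → ℕ := fun r => Nat.findGreatest (fun k => P k ≤ S r) n
  have hgn : ∀ r, g r ≤ n := fun r => Nat.findGreatest_le n
  have hgP : ∀ r, r ≤ m → P (g r) ≤ S r := fun r hr =>
    Nat.findGreatest_spec (P := fun k => P k ≤ S r) (Nat.zero_le n)
      (by simpa only [hP0] using hSnonneg r hr)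
  -- The value at `0` is set by hand: `g 0 > 0` when the first modules have zero coverage time.
  let e : ℕ → ℕ := fun r => if r = 0 then 0 else g r
  have he0 : e 0 = 0 := rfl
  have hes : ∀ r, e (r + 1) = g (r + 1) := fun r => if_neg (Nat.succ_ne_zero r)
  have hen : ∀ r, e r ≤ n := by
    rintro (_ | r)
    · exact Nat.zero_le n
    · rw [hes]; exact hgn _
  have heP : ∀ r, r ≤ m → P (e r) ≤ S r := by
    rintro (_ | r) hr
    · rw [he0, hP0, hS0]
    · rw [hes]; exact hgP _ hr
  have heS : ∀ r, e r < n → S r ≤ P (e r) + M := by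
    rintro (_ | r) hr
    · rw [he0, hP0, hS0]; linarith
    · rw [hes] at hr ⊢
      have hlt : ¬ P (g (r + 1) + 1) ≤ S (r + 1) :=
        Nat.findGreatest_is_greatest (P := fun k => P k ≤ S (r + 1))
          (Nat.lt_succ_self _) hr
      have hle := hcM (g (r + 1) + 1) (by simp only [Finset.mem_Icc]; omega)
      rw [hPs] at hlt
      linarith
  have hmono : ∀ r, r < m → e r ≤ e (r + 1) := by
    intro r hr
    rw [hes r]
    refine Nat.le_findGreatest (hen r) ?_
    have hBr := hB (r + 1) (by simp only [Finset.mem_Icc]; omega)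
    have := heP r hr.le
    rw [hSs]
    linarith
  have hem : e m = n := by
    obtain ⟨k, rfl⟩ : ∃ k, m = k + 1 := ⟨m - 1, by omega⟩
    rw [hes]
    exact le_antisymm (hgn _) (Nat.le_findGreatest le_rfl hsum)
  refine ⟨e, he0, hem, hmono, ?_⟩
  intro r hr
  obtain ⟨k, rfl⟩ : ∃ k, r = k + 1 := ⟨r - 1, by simp only [Finset.mem_Icc] at hr; omega⟩
  have hkm : k + 1 ≤ m := (Finset.mem_Icc.mp hr).2
  have hBr := hB _ hr
  rw [Nat.add_sub_cancel, hblock _ _ (hmono k hkm)]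
  rcases (hen k).lt_or_eq with hlt | heq
  · have hupper := heP (k + 1) hkm
    have hlower := heS k hlt
    rw [hSs] at hupper
    linarith
  · have : e (k + 1) = e k := le_antisymm (heq ▸ hen (k + 1)) (hmono k hkm)
    rw [this]
    linarith
end

section
/- Let n ≥ 1, m ≥ 1, let c(1),…,c(n) be strictly positive reals and d(1),…,d(n−1) be nonnegative reals. Let T(r,i) ≥ 0 for r ∈ {1,…,m}, i ∈ {1,…,n} satisfy ∑_{r=1}^{m} T(r,i) ≥ c(i) for every module i. For each robot r let σ(r) ∈ {0,1,…,n} be such that T(r,i) = 0 whenever i > σ(r), and assume σ(1) ≤ σ(2) ≤ … ≤ σ(m). Let M be a real number such that for every r: M ≥ ∑_{i=1}^{n} T(r,i) + 2·∑_{h=1}^{σ(r)−1} d(h). Then f(1,n,m) ≤ M + max_{1≤i≤n} c(i). (This is the additive bound, inequality (1) of Theorem 1: there exists an integer solution whose makespan exceeds the optimal makespan by at most the largest single-module coverage time.) -/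
/-!
The integer solution is built greedily, robot by robot in order of increasing reach `σ`: robot `r`
continues from the module where its predecessor stopped, and takes modules until its covering load
first reaches the fractional load `∑ i, T r i`, or until it arrives at module `σ r`. Its load
exceeds the fractional one by less than the last module taken, and it travels no further than
`σ r`, so its tour costs at most `M + max c` (`exists_greedy_stop`).

That all modules get covered follows from an invariant: the work `∑_{i > e r} c i` left after
robot `r` is at most the total fractional load of the robots after `r`. If robot `r` fills its
load, the left side drops by at least that load and the right side by exactly it. If it stops at `e r = σ r`, no robot up to `r` ever covers a
module beyond `σ r`, so the remaining modules are covered by later robots alone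
(`work_beyond_le`). After robot `m` the work left is at most `0`, and positivity of `c` makes the
set of remaining modules empty.
-/

/-- Cost of the tour of a robot assigned the interval of modules `{a+1, …, b}`
(empty if `b ≤ a`): total coverage time plus twice the travel time from the
depot `d₁` to the doorway of module `b`. -/
noncomputable def tourCost (c d : ℕ → ℝ) (a b : ℕ) : ℝ :=
  if a < b then (∑ h ∈ Finset.Icc (a+1) b, c h) + 2 * ∑ h ∈ Finset.Icc 1 (b-1), d h else 0

/-- Makespan of the integer solution with split endpoints `e`: robot `r`
(for `1 ≤ r ≤ k`) covers modules `{e (r-1) + 1, …, e r}`. -/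
noncomputable def intMakespan (c d : ℕ → ℝ) (k : ℕ) (e : ℕ → ℕ) : ℝ :=
  (Finset.Icc 1 k).fold max 0 (fun r => tourCost c d (e (r-1)) (e r))

/-- `f c d i j k`: minimum makespan of an integer solution in which `k` robots
cover the modules `{i, …, j}`, splitting them into `k` consecutive (possibly
empty) sub-intervals. -/
noncomputable def f (c d : ℕ → ℝ) (i j k : ℕ) : ℝ :=
  sInf { M : ℝ | ∃ e : ℕ → ℕ, Monotone e ∧ e 0 = i - 1 ∧ e k = j ∧ M = intMakespan c d k e }

/-- One greedy step: starting after module `a` with reach `s` and load target `B`, there is a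
stopping point `b` whose load overshoots `B` by at most one module, and which is either `s` or a
point where the target is met. -/
lemma exists_greedy_stop (c d : ℕ → ℝ) (n a s : ℕ) (B D K C : ℝ) (has : a ≤ s) (hsn : s ≤ n)
    (hd : ∀ h ∈ Finset.Icc 1 (n - 1), 0 ≤ d h)
    (hC : ∀ i ∈ Finset.Icc 1 n, c i ≤ C) (hC0 : 0 ≤ C) (hK0 : 0 ≤ K)
    (hD : D = 2 * ∑ h ∈ Finset.Icc 1 (s - 1), d h) (hK : B + C + D ≤ K) :
    ∃ b, a ≤ b ∧ b ≤ s ∧ tourCost c d a b ≤ K ∧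
      (b = s ∨ B ≤ ∑ h ∈ Finset.Icc (a + 1) b, c h) := by
  have hcost : ∀ b ≤ s, (∑ h ∈ Finset.Icc (a + 1) b, c h) ≤ B + C → tourCost c d a b ≤ K := by
    intro b hb hsum
    unfold tourCost
    split_ifs with hab
    · have : ∑ h ∈ Finset.Icc 1 (b - 1), d h ≤ ∑ h ∈ Finset.Icc 1 (s - 1), d h := by
        apply Finset.sum_le_sum_of_subset_of_nonneg
        · exact Finset.Icc_subset_Icc_right (by omega)
        · intro i hi _
          apply hd
          simp only [Finset.mem_Icc] at hi ⊢
          omega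
      linarith
    · exact hK0
  by_cases hex : ∃ b, a ≤ b ∧ b ≤ s ∧ B ≤ ∑ h ∈ Finset.Icc (a + 1) b, c h
  · classical
    obtain ⟨hab, hbs, hB⟩ := Nat.find_spec hex
    have hmin := fun k => Nat.find_min hex (m := k)
    generalize Nat.find hex = b at *
    refine ⟨b, hab, hbs, ?_, Or.inr hB⟩
    rcases hab.eq_or_lt with rfl | hlt
    · simpa [tourCost] using hK0
    · apply hcost b hbs
      -- minimality of `b`: the load up to `b - 1` is still below the target
      obtain ⟨k, rfl⟩ : ∃ k, b = k + 1 := ⟨b - 1, by omega⟩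
      have hk := hmin k (by omega)
      have hlow : ∑ h ∈ Finset.Icc (a + 1) k, c h < B := by
        by_contra hcon
        exact hk ⟨by omega, by omega, not_lt.mp hcon⟩
      rw [Finset.sum_Icc_succ_top (by omega)]
      have := hC (k + 1) (by simp; omega)
      linarith
  · refine ⟨s, has, le_rfl, hcost s le_rfl ?_, Or.inl rfl⟩
    have : ∑ h ∈ Finset.Icc (a + 1) s, c h < B := by
      by_contra hcon
      exact hex ⟨s, has, le_rfl, not_lt.mp hcon⟩
    linarith

/-- The modules beyond the reach of robot `k` are covered by the robots after `k` alone. -/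
lemma work_beyond_le (n m k : ℕ) (c : ℕ → ℝ) (T : ℕ → ℕ → ℝ) (σ : ℕ → ℕ) (hk1 : 1 ≤ k)
    (hkm : k ≤ m)
    (hT : ∀ r ∈ Finset.Icc 1 m, ∀ i ∈ Finset.Icc 1 n, 0 ≤ T r i)
    (hcov : ∀ i ∈ Finset.Icc 1 n, c i ≤ ∑ r ∈ Finset.Icc 1 m, T r i)
    (hσzero : ∀ r ∈ Finset.Icc 1 m, ∀ i, σ r < i → T r i = 0)
    (hσmono : ∀ r r', 1 ≤ r → r ≤ r' → r' ≤ m → σ r ≤ σ r') :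
    ∑ i ∈ Finset.Icc (σ k + 1) n, c i ≤
      ∑ r ∈ Finset.Icc (k + 1) m, ∑ i ∈ Finset.Icc 1 n, T r i := by
  calc ∑ i ∈ Finset.Icc (σ k + 1) n, c i
      ≤ ∑ i ∈ Finset.Icc (σ k + 1) n, ∑ r ∈ Finset.Icc (k + 1) m, T r i := by
        apply Finset.sum_le_sum
        intro i hi
        rw [Finset.mem_Icc] at hi
        refine (hcov i (by simp; omega)).trans (le_of_eq ?_)
        symm
        apply Finset.sum_subset (Finset.Icc_subset_Icc_left (by omega))
        intro r hr hr'
        have hrk : r ≤ k := by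
          simp only [Finset.mem_Icc] at hr hr'
          omega
        have := hσmono r k (Finset.mem_Icc.mp hr).1 hrk hkm
        exact hσzero r hr i (by omega)
    _ = ∑ r ∈ Finset.Icc (k + 1) m, ∑ i ∈ Finset.Icc (σ k + 1) n, T r i := Finset.sum_comm
    _ ≤ _ := by
        apply Finset.sum_le_sum
        intro r hr
        apply Finset.sum_le_sum_of_subset_of_nonneg (Finset.Icc_subset_Icc_left (by omega))
        intro i hi _
        exact hT r (Finset.Icc_subset_Icc_left (by omega) hr) i hi

lemma sum_Icc_split (g : ℕ → ℝ) {a b n : ℕ} (hab : a ≤ b) (hbn : b ≤ n) :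
    ∑ i ∈ Finset.Icc (a + 1) n, g i =
      ∑ i ∈ Finset.Icc (a + 1) b, g i + ∑ i ∈ Finset.Icc (b + 1) n, g i := by
  simp only [← Finset.Ico_add_one_right_eq_Icc]
  exact (Finset.sum_Ico_consecutive g (by omega) (by omega)).symm

/-- Inequality (1) of Theorem 1: if `T r i` is the time robot `r` spends covering
module `i` in a feasible solution whose makespan is at most `M`, then there is an
integer solution of makespan at most `M + max_i c i`, i.e.,
`f 1 n m ≤ M + max_i c i`. -/
theorem int_solution_additive_bound (n m : ℕ) (hn : 1 ≤ n) (hm : 1 ≤ m)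
    (c d : ℕ → ℝ)
    (hc : ∀ i ∈ Finset.Icc 1 n, 0 < c i)
    (hd : ∀ h ∈ Finset.Icc 1 (n - 1), 0 ≤ d h)
    (T : ℕ → ℕ → ℝ)
    (hT : ∀ r ∈ Finset.Icc 1 m, ∀ i ∈ Finset.Icc 1 n, 0 ≤ T r i)
    (hcov : ∀ i ∈ Finset.Icc 1 n, c i ≤ ∑ r ∈ Finset.Icc 1 m, T r i)
    (σ : ℕ → ℕ)
    (hσle : ∀ r ∈ Finset.Icc 1 m, σ r ≤ n)
    (hσzero : ∀ r ∈ Finset.Icc 1 m, ∀ i, σ r < i → T r i = 0)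
    (hσmono : ∀ r r', 1 ≤ r → r ≤ r' → r' ≤ m → σ r ≤ σ r')
    (M : ℝ)
    (hM : ∀ r ∈ Finset.Icc 1 m,
      (∑ i ∈ Finset.Icc 1 n, T r i) + 2 * ∑ h ∈ Finset.Icc 1 (σ r - 1), d h ≤ M) :
    f c d 1 n m ≤ M + (Finset.Icc 1 n).sup' (Finset.nonempty_Icc.mpr hn) c := by
  set C := (Finset.Icc 1 n).sup' (Finset.nonempty_Icc.mpr hn) c with hCdef
  have hC : ∀ i ∈ Finset.Icc 1 n, c i ≤ C := fun i hi => Finset.le_sup' c hi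
  have hC0 : 0 ≤ C := by
    have h1 : 1 ∈ Finset.Icc 1 n := by simp; omega
    exact (hc 1 h1).le.trans (hC 1 h1)
  have hM0 : 0 ≤ M := by
    have h1 : 1 ∈ Finset.Icc 1 m := by simp; omega
    refine le_trans (add_nonneg (Finset.sum_nonneg (hT 1 h1)) ?_) (hM 1 h1)
    refine mul_nonneg zero_le_two (Finset.sum_nonneg fun i hi => hd i ?_)
    have := hσle 1 h1
    simp only [Finset.mem_Icc] at hi ⊢
    omega
  -- off the meaningful range the step stays put, so that iterating it is monotone throughout
  have hstep : ∀ r a, ∃ b, a ≤ b ∧ (r + 1 ≤ m → a ≤ σ (r + 1) →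
      b ≤ σ (r + 1) ∧ tourCost c d a b ≤ M + C ∧
        (b = σ (r + 1) ∨
          ∑ i ∈ Finset.Icc 1 n, T (r + 1) i ≤ ∑ h ∈ Finset.Icc (a + 1) b, c h)) := by
    intro r a
    by_cases h : r + 1 ≤ m ∧ a ≤ σ (r + 1)
    · have hr : r + 1 ∈ Finset.Icc 1 m := by simp; omega
      obtain ⟨b, h1, h2⟩ := exists_greedy_stop c d n a (σ (r + 1))
        (∑ i ∈ Finset.Icc 1 n, T (r + 1) i) _ (M + C) C h.2 (hσle _ hr) hd hC hC0
        (by linarith) rfl (by linarith [hM _ hr])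
      exact ⟨b, h1, fun _ _ => h2⟩
    · exact ⟨a, le_rfl, fun h1 h2 => (h ⟨h1, h2⟩).elim⟩
  choose nxt hle hnxt using hstep
  let e : ℕ → ℕ := fun k => Nat.rec 0 nxt k
  have he0 : e 0 = 0 := rfl
  have hes : ∀ k, e (k + 1) = nxt k (e k) := fun _ => rfl
  have hmono : Monotone e := monotone_nat_of_le_succ fun k => hle k (e k)
  have hreach : ∀ k, k + 1 ≤ m → e k ≤ σ (k + 1) := by
    intro k
    induction k with
    | zero => intro _; simp [he0]
    | succ k ih =>
      intro hk
      have h1 := (hnxt k (e k) (by omega) (ih (by omega))).1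
      have h2 := hσmono (k + 1) (k + 1 + 1) (by omega) (by omega) hk
      rw [hes]
      omega
  -- the work left after robot `k` is at most the fractional load of the later robots
  have hinv : ∀ k, k ≤ m → ∑ i ∈ Finset.Icc (e k + 1) n, c i ≤
      ∑ r ∈ Finset.Icc (k + 1) m, ∑ i ∈ Finset.Icc 1 n, T r i := by
    intro k
    induction k with
    | zero =>
      intro _
      rw [Finset.sum_comm]
      simpa [he0] using Finset.sum_le_sum hcov
    | succ k ih =>
      intro hk
      obtain ⟨h1, -, h3⟩ := hnxt k (e k) hk (hreach k hk)
      rw [← hes] at h1 h3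
      rcases h3 with h3 | h3
      · rw [h3]
        exact work_beyond_le n m (k + 1) c T σ (by omega) hk hT hcov hσzero hσmono
      · have hn' := hσle (k + 1) (by simp; omega)
        have ih' := ih (by omega)
        rw [sum_Icc_split c (hmono (Nat.le_succ k)) (h1.trans hn'),
          sum_Icc_split _ (Nat.le_succ k) hk] at ih'
        simp only [Nat.succ_eq_add_one, Finset.Icc_self, Finset.sum_singleton] at ih'
        linarith
  have hem : e m = n := by
    have hlen : e m ≤ n := by
      obtain ⟨k, rfl⟩ : ∃ k, m = k + 1 := ⟨m - 1, by omega⟩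
      rw [hes]
      exact ((hnxt k (e k) le_rfl (hreach k le_rfl)).1).trans (hσle _ (by simp))
    by_contra hne
    have h0 := hinv m le_rfl
    rw [Finset.Icc_eq_empty (a := m + 1) (by omega), Finset.sum_empty] at h0
    refine absurd h0 (not_le.mpr (Finset.sum_pos (fun i hi => hc i ?_) ?_))
    · exact Finset.Icc_subset_Icc_left (by omega) hi
    · exact Finset.nonempty_Icc.mpr (by omega)
  have hbdd : BddBelow { M : ℝ | ∃ e : ℕ → ℕ, Monotone e ∧ e 0 = 1 - 1 ∧ e m = n ∧
      M = intMakespan c d m e } := by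
    refine ⟨0, ?_⟩
    rintro x ⟨e', -, -, -, rfl⟩
    exact (Finset.le_fold_max 0).mpr (Or.inl le_rfl)
  refine (csInf_le hbdd ⟨e, hmono, he0, hem, rfl⟩).trans ?_
  refine (Finset.fold_max_le (M + C)).mpr ⟨by linarith, fun r hr => ?_⟩
  obtain ⟨k, rfl⟩ : ∃ k, r = k + 1 := ⟨r - 1, by simp at hr; omega⟩
  have hk : k + 1 ≤ m := (Finset.mem_Icc.mp hr).2
  rw [Nat.add_sub_cancel, hes]
  exact (hnxt k (e k) hk (hreach k hk)).2.1
end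

section
/- For every k ≥ 2 and all module indices 1 ≤ i ≤ j ≤ n, the split-point recurrence holds: f(i,j,k) = min_{i ≤ h ≤ j} max( f(i,h,⌊k/2⌋), f(h+1,j,⌈k/2⌉) ), where f(j+1,j,·) = 0 denotes the cost of covering an empty interval. (Correctness of the split-point definition: an optimal integer solution for k robots on {i,…,j} splits at some module h, with ⌊k/2⌋ robots covering {i,…,h} and ⌈k/2⌉ robots covering {h+1,…,j}.) -/
lemma tourCost_nonneg {n : ℕ} {c d : ℕ → ℝ} (hc : ∀ i ∈ Finset.Icc 1 n, 0 ≤ c i)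
    (hd : ∀ h ∈ Finset.Icc 1 (n - 1), 0 ≤ d h) {a b : ℕ} (hb : b ≤ n) :
    0 ≤ tourCost c d a b := by
  unfold tourCost
  split_ifs
  · have h1 : 0 ≤ ∑ h ∈ Finset.Icc (a + 1) b, c h := Finset.sum_nonneg fun x hx => by
      simp only [Finset.mem_Icc] at hx hc
      exact hc x (by omega)
    have h2 : 0 ≤ ∑ h ∈ Finset.Icc 1 (b - 1), d h := Finset.sum_nonneg fun x hx => by
      simp only [Finset.mem_Icc] at hx hd
      exact hd x (by omega)
    linarith
  · exact le_rfl

lemma tourCost_mono {n : ℕ} {c d : ℕ → ℝ} (hc : ∀ i ∈ Finset.Icc 1 n, 0 ≤ c i)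
    (hd : ∀ h ∈ Finset.Icc 1 (n - 1), 0 ≤ d h) {a a' b b' : ℕ} (ha : a ≤ a') (hbb : b' ≤ b)
    (hb : b ≤ n) : tourCost c d a' b' ≤ tourCost c d a b := by
  by_cases h : a' < b'
  · unfold tourCost
    rw [if_pos h, if_pos (by omega)]
    have h1 : ∑ h ∈ Finset.Icc (a' + 1) b', c h ≤ ∑ h ∈ Finset.Icc (a + 1) b, c h :=
      Finset.sum_le_sum_of_subset_of_nonneg (Finset.Icc_subset_Icc (by omega) hbb)
        fun x hx _ => by
          simp only [Finset.mem_Icc] at hx hc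
          exact hc x (by omega)
    have h2 : ∑ h ∈ Finset.Icc 1 (b' - 1), d h ≤ ∑ h ∈ Finset.Icc 1 (b - 1), d h :=
      Finset.sum_le_sum_of_subset_of_nonneg (Finset.Icc_subset_Icc le_rfl (by omega))
        fun x hx _ => by
          simp only [Finset.mem_Icc] at hx hd
          exact hd x (by omega)
    linarith
  · rw [tourCost, if_neg h]
    exact tourCost_nonneg hc hd hb

/-- Removing the modules up to `p` from a robot's interval does not increase its cost. -/
lemma tourCost_max_le {n : ℕ} {c d : ℕ → ℝ} (hc : ∀ i ∈ Finset.Icc 1 n, 0 ≤ c i)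
    (hd : ∀ h ∈ Finset.Icc 1 (n - 1), 0 ≤ d h) {a b : ℕ} (p : ℕ) (hb : b ≤ n) :
    tourCost c d (max a p) (max b p) ≤ tourCost c d a b := by
  rcases le_total b p with h | h
  · have : ¬ max a p < max b p := by omega
    rw [tourCost, if_neg this]
    exact tourCost_nonneg hc hd hb
  · rw [max_eq_left h]
    exact tourCost_mono hc hd (le_max_left _ _) le_rfl hb

/-- The infimum defining `f` lies below `M` iff some admissible split has all its tours shorter
than `M`. The conditions on `k`, `i` and `j` make the set of splits nonempty, so that the infimum
is not a junk value. -/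
lemma f_lt_iff (c d : ℕ → ℝ) {i j k : ℕ} (hk : 1 ≤ k) (hij : i - 1 ≤ j) (M : ℝ) :
    f c d i j k < M ↔ ∃ e : ℕ → ℕ, Monotone e ∧ e 0 = i - 1 ∧ e k = j ∧ 0 < M ∧
      ∀ r, 1 ≤ r → r ≤ k → tourCost c d (e (r - 1)) (e r) < M := by
  unfold f
  rw [csInf_lt_iff]
  · constructor
    · rintro ⟨_, ⟨e, he, h0, hj, rfl⟩, hM⟩
      rw [intMakespan, Finset.fold_max_lt] at hM
      exact ⟨e, he, h0, hj, hM.1, fun r h1 h2 => hM.2 r (Finset.mem_Icc.2 ⟨h1, h2⟩)⟩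
    · rintro ⟨e, he, h0, hj, hM, h⟩
      refine ⟨_, ⟨e, he, h0, hj, rfl⟩, ?_⟩
      rw [intMakespan, Finset.fold_max_lt]
      exact ⟨hM, fun r hr => h r (Finset.mem_Icc.1 hr).1 (Finset.mem_Icc.1 hr).2⟩
  · refine ⟨0, ?_⟩
    rintro _ ⟨e, -, -, -, rfl⟩
    rw [intMakespan, Finset.le_fold_max]
    exact Or.inl le_rfl
  · refine ⟨_, fun r => if r = 0 then i - 1 else j, ?_, by simp, ?_, rfl⟩
    · intro a b hab
      dsimp only
      split_ifs <;> omega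
    · exact if_neg (by omega)

/-- Correctness of the split-point recurrence: for `k ≥ 2` robots covering the
modules `{i, …, j}`,
`f i j k = min_{i ≤ h ≤ j} max (f i h ⌊k/2⌋) (f (h+1) j ⌈k/2⌉)`,
where `f (j+1) j _ = 0` is the cost of covering an empty interval. -/
theorem f_split_point_recurrence (n : ℕ) (hn : 1 ≤ n) (c d : ℕ → ℝ)
    (hc : ∀ i ∈ Finset.Icc 1 n, 0 ≤ c i)
    (hd : ∀ h ∈ Finset.Icc 1 (n - 1), 0 ≤ d h)
    (k : ℕ) (hk : 2 ≤ k) (i j : ℕ) (hi1 : 1 ≤ i) (hij : i ≤ j) (hjn : j ≤ n) :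
    f c d i j k =
      (Finset.Icc i j).inf' (Finset.nonempty_Icc.mpr hij)
        (fun h => max (f c d i h (k / 2)) (f c d (h + 1) j ((k + 1) / 2))) := by
  refine eq_of_forall_gt_iff fun M => ?_
  obtain ⟨m, hm⟩ : ∃ m, m = k / 2 := ⟨_, rfl⟩
  obtain ⟨m', hm'⟩ : ∃ m', m' = (k + 1) / 2 := ⟨_, rfl⟩
  rw [← hm, ← hm', Finset.inf'_lt_iff, f_lt_iff c d (by omega) (by omega)]
  have hk' : k = m + m' := by omega
  have hm1 : 1 ≤ m := by omega
  have hm1' : 1 ≤ m' := by omega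
  constructor
  · rintro ⟨e, he, h0, hj, hM, hcost⟩
    have hen : ∀ r, r ≤ k → e r ≤ j := fun r hr => hj ▸ he hr
    by_cases hem : i ≤ e m
    · have hemj := hen m (by omega)
      refine ⟨e m, Finset.mem_Icc.2 ⟨hem, hemj⟩, ?_⟩
      rw [max_lt_iff, f_lt_iff c d hm1 (by omega), f_lt_iff c d hm1' (by omega)]
      refine ⟨⟨e, he, h0, rfl, hM, fun r h1 h2 => hcost r h1 (by omega)⟩,
        ⟨fun r => e (m + r), fun a b hab => he (by omega), by simp, (congrArg e hk').symm.trans hj, hM,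
          fun r h1 h2 => ?_⟩⟩
      have := hcost (m + r) (by omega) (by omega)
      rwa [show m + r - 1 = m + (r - 1) by omega] at this
    · -- The first `m` robots are idle, and module `i` is handed over to robot `m`.
      refine ⟨i, Finset.mem_Icc.2 ⟨le_rfl, hij⟩, ?_⟩
      rw [max_lt_iff, f_lt_iff c d hm1 (by omega), f_lt_iff c d hm1' (by omega)]
      -- Robot `s` is the one that covers module `i` in the given split.
      have hex : ∃ s, i ≤ e s := ⟨k, by omega⟩
      obtain ⟨s, hs, hmin⟩ : ∃ s, i ≤ e s ∧ ∀ t, t < s → ¬ i ≤ e t :=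
        ⟨Nat.find hex, Nat.find_spec hex, fun t ht => Nat.find_min hex ht⟩
      have hs1 : 1 ≤ s := by
        rcases Nat.eq_zero_or_pos s with rfl | h
        · omega
        · exact h
      have hsk : s ≤ k := by
        by_contra hcon
        exact hmin k (by omega) (by omega)
      have hprev := hmin (s - 1) (by omega)
      have hsj := hen s hsk
      have hone : tourCost c d (i - 1) i < M :=
        (tourCost_mono hc hd (by omega) hs (by omega)).trans_lt (hcost s hs1 hsk)
      refine ⟨⟨fun r => if r < m then i - 1 else i, ?_, ?_, by simp, hM, ?_⟩,
        ⟨fun r => max (e (m + r)) i, ?_, ?_, ?_, hM, ?_⟩⟩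
      · intro a b hab
        dsimp only
        split_ifs <;> omega
      · exact if_pos (by omega)
      · intro r h1 h2
        dsimp only
        rw [if_pos (by omega)]
        split_ifs
        · simpa [tourCost] using hM
        · exact hone
      · intro a b hab
        exact max_le_max (he (by omega)) le_rfl
      · dsimp only
        rw [add_zero]
        omega
      · dsimp only
        rw [← hk']
        omega
      · intro r h1 h2
        have hcr := hcost (m + r) (by omega) (by omega)
        rw [show m + r - 1 = m + (r - 1) by omega] at hcr
        have := hen (m + r) (by omega)
        exact (tourCost_max_le hc hd i (by omega)).trans_lt hcr
  · rintro ⟨h, hh, hlt⟩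
    rw [Finset.mem_Icc] at hh
    rw [max_lt_iff, f_lt_iff c d hm1 (by omega), f_lt_iff c d hm1' (by omega)] at hlt
    obtain ⟨⟨e₁, he₁, h0₁, hj₁, hM, hc₁⟩, ⟨e₂, he₂, h0₂, hj₂, -, hc₂⟩⟩ := hlt
    rw [Nat.add_sub_cancel] at h0₂
    refine ⟨fun r => if r ≤ m then e₁ r else e₂ (r - m), ?_, by simpa using h0₁, ?_, hM, ?_⟩
    · intro a b hab
      dsimp only
      split_ifs with ha hb hb
      · exact he₁ hab
      · have h1 := he₁ ha
        have h2 := he₂ (Nat.zero_le (b - m))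
        omega
      · omega
      · exact he₂ (by omega)
    · dsimp only
      rw [if_neg (by omega), show k - m = m' by omega, hj₂]
    · intro r h1 h2
      dsimp only
      by_cases hr : r ≤ m
      · rw [if_pos hr, if_pos (by omega)]
        exact hc₁ r h1 hr
      · have hcr := hc₂ (r - m) (by omega) (by omega)
        rw [if_neg hr]
        split_ifs with hr'
        · -- The first robot of the second half starts where the first half ends.
          rw [show r - 1 = m by omega, hj₁, ← h0₂]
          rwa [show r - m - 1 = 0 by omega] at hcr
        · rwa [show r - 1 - m = r - m - 1 by omega]
end

section
/- For every fixed number of robots k ≥ 1: (a) for fixed i, the function h ↦ f(i,h,k) is monotonically non-decreasing in h on {i,…,n}; (b) for fixed j, the function h ↦ f(h,j,k) is monotonically non-increasing in h on {1,…,j}. (These monotonicity properties of the two arguments of the max operator in the split-point equation justify the binary search for a split point.) -/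
/-- Shrinking an interval of modules, or making it empty, does not increase its tour cost. -/
lemma tourCost_le {n : ℕ} {c d : ℕ → ℝ} (hc : ∀ i ∈ Finset.Icc 1 n, 0 ≤ c i)
    (hd : ∀ h ∈ Finset.Icc 1 (n - 1), 0 ≤ d h) {a b a' b' : ℕ} (hb : b ≤ n)
    (hsub : a' < b' → a ≤ a' ∧ b' ≤ b) : tourCost c d a' b' ≤ tourCost c d a b := by
  have hc' : ∀ x ∈ Finset.Icc (a + 1) b, 0 ≤ c x := fun x hx => hc x (by
    simp only [Finset.mem_Icc] at hx ⊢; omega)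
  have hd' : ∀ x ∈ Finset.Icc 1 (b - 1), 0 ≤ d x := fun x hx => hd x (by
    simp only [Finset.mem_Icc] at hx ⊢; omega)
  unfold tourCost
  by_cases hab' : a' < b'
  · obtain ⟨h1, h2⟩ := hsub hab'
    rw [if_pos hab', if_pos (by omega)]
    have hC : ∑ x ∈ Finset.Icc (a' + 1) b', c x ≤ ∑ x ∈ Finset.Icc (a + 1) b, c x :=
      Finset.sum_le_sum_of_subset_of_nonneg (Finset.Icc_subset_Icc (by omega) h2)
        fun x hx _ => hc' x hx
    have hD : ∑ x ∈ Finset.Icc 1 (b' - 1), d x ≤ ∑ x ∈ Finset.Icc 1 (b - 1), d x :=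
      Finset.sum_le_sum_of_subset_of_nonneg (Finset.Icc_subset_Icc le_rfl (by omega))
        fun x hx _ => hd' x hx
    linarith
  · rw [if_neg hab']
    split_ifs
    · have := Finset.sum_nonneg hc'
      have := Finset.sum_nonneg hd'
      linarith
    · exact le_rfl

lemma intMakespan_nonneg (c d : ℕ → ℝ) (k : ℕ) (e : ℕ → ℕ) : 0 ≤ intMakespan c d k e :=
  (Finset.le_fold_max _).mpr (Or.inl le_rfl)

lemma intMakespan_mono {c d : ℕ → ℝ} {k : ℕ} {e e' : ℕ → ℕ}
    (h : ∀ r ∈ Finset.Icc 1 k,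
      tourCost c d (e' (r - 1)) (e' r) ≤ tourCost c d (e (r - 1)) (e r)) :
    intMakespan c d k e' ≤ intMakespan c d k e :=
  (Finset.fold_max_le _).mpr ⟨intMakespan_nonneg c d k e,
    fun r hr => (Finset.le_fold_max _).mpr (Or.inr ⟨r, hr, h r hr⟩)⟩

/-- If a monotone map `g` of split endpoints turns every solution for `{i, …, j}` into one for
`{i', …, j'}` in which each robot's interval has shrunk or become empty, then the optimum for
`{i', …, j'}` is at most the one for `{i, …, j}`. -/
lemma f_le_of_clamp {n : ℕ} {c d : ℕ → ℝ} (hc : ∀ i ∈ Finset.Icc 1 n, 0 ≤ c i)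
    (hd : ∀ h ∈ Finset.Icc 1 (n - 1), 0 ≤ d h) {k : ℕ} (hk : 1 ≤ k) {i j i' j' : ℕ}
    (hij : i - 1 ≤ j) (hj : j ≤ n) (g : ℕ → ℕ) (hg : Monotone g)
    (hgi : g (i - 1) = i' - 1) (hgj : g j = j')
    (hsub : ∀ a b, i - 1 ≤ a → b ≤ j → g a < g b → a ≤ g a ∧ g b ≤ b) :
    f c d i' j' k ≤ f c d i j k := by
  apply le_csInf
  · -- A solution exists: the first robot takes the whole interval.
    refine ⟨_, fun r => if r = 0 then i - 1 else j, ?_, by simp, ?_, rfl⟩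
    · intro r s hrs
      dsimp only
      split_ifs <;> omega
    · exact if_neg (by omega)
  · rintro M ⟨e, he, he0, hek, rfl⟩
    have hlow : BddBelow { M : ℝ | ∃ e : ℕ → ℕ, Monotone e ∧ e 0 = i' - 1 ∧ e k = j' ∧
        M = intMakespan c d k e } :=
      ⟨0, by rintro _ ⟨e, -, -, -, rfl⟩; exact intMakespan_nonneg c d k e⟩
    refine (csInf_le hlow ⟨fun r => g (e r), hg.comp he, by simp only [he0, hgi],
      by simp only [hek, hgj], rfl⟩).trans (intMakespan_mono fun r hr => ?_)
    have hrj : e r ≤ j := hek ▸ he (Finset.mem_Icc.mp hr).2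
    exact tourCost_le hc hd (hrj.trans hj)
      (hsub _ _ (he0 ▸ he (Nat.zero_le _)) hrj)

/-- Monotonicity of `f` in the interval endpoints: for a fixed number of robots
`k ≥ 1`, (a) `h ↦ f i h k` is monotonically non-decreasing, and
(b) `h ↦ f h j k` is monotonically non-increasing. -/
theorem f_monotone_in_endpoints (n : ℕ) (hn : 1 ≤ n) (c d : ℕ → ℝ)
    (hc : ∀ i ∈ Finset.Icc 1 n, 0 ≤ c i)
    (hd : ∀ h ∈ Finset.Icc 1 (n - 1), 0 ≤ d h)
    (k : ℕ) (hk : 1 ≤ k) :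
    (∀ i h h', 1 ≤ i → i ≤ h → h ≤ h' → h' ≤ n → f c d i h k ≤ f c d i h' k) ∧
    (∀ j h h', 1 ≤ h → h ≤ h' → h' ≤ j → j ≤ n → f c d h' j k ≤ f c d h j k) := by
  refine ⟨fun i h h' hi hih hhh' hh'n => ?_, fun j h h' h1 hhh' hh'j hjn => ?_⟩
  · refine f_le_of_clamp hc hd hk (by omega) hh'n (fun x => min x h)
      (fun x y hxy => by dsimp only; omega) ?_ ?_ ?_ <;> omega
  · refine f_le_of_clamp hc hd hk (by omega) hjn (fun x => max x (h' - 1))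
      (fun x y hxy => by dsimp only; omega) ?_ ?_ ?_ <;> omega
end

section
/- Let i ≤ ĥ < j be integers and let l, u : ℤ → ℝ be functions such that l is monotonically non-decreasing and u is monotonically non-increasing on the integer interval [i,j]. If l(ĥ) ≤ u(ĥ) and l(ĥ+1) ≥ u(ĥ+1), then min_{i ≤ h ≤ j} max(l(h), u(h)) = min( max(l(ĥ), u(ĥ)), max(l(ĥ+1), u(ĥ+1)) ); that is, at least one of ĥ and ĥ+1 minimizes max(l(·),u(·)) over [i,j]. (Lemma 1: at least one of ĥ and ĥ+1 is a split point.) -/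
/-- Lemma 1: if `l` is non-decreasing and `u` is non-increasing on the integer
interval `[i, j]`, and they cross between `h0` and `h0 + 1`, then at least one
of `h0` and `h0 + 1` minimizes `max (l h) (u h)` over `[i, j]`. -/
theorem split_point_crossing (i j h0 : ℤ) (hih0 : i ≤ h0) (hh0j : h0 < j)
    (l u : ℤ → ℝ)
    (hl : ∀ a b, i ≤ a → a ≤ b → b ≤ j → l a ≤ l b)
    (hu : ∀ a b, i ≤ a → a ≤ b → b ≤ j → u b ≤ u a)
    (h1 : l h0 ≤ u h0) (h2 : u (h0 + 1) ≤ l (h0 + 1)) :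
    (Finset.Icc i j).inf' (Finset.nonempty_Icc.mpr (hih0.trans hh0j.le))
        (fun h => max (l h) (u h)) =
      min (max (l h0) (u h0)) (max (l (h0 + 1)) (u (h0 + 1))) := by
  apply le_antisymm
  · exact le_min
      (Finset.inf'_le (fun h => max (l h) (u h)) (Finset.mem_Icc.mpr ⟨hih0, hh0j.le⟩))
      (Finset.inf'_le (fun h => max (l h) (u h)) (Finset.mem_Icc.mpr ⟨by omega, by omega⟩))
  · refine Finset.le_inf' _ _ fun h hh => ?_
    obtain ⟨hi, hj⟩ := Finset.mem_Icc.mp hh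
    -- The crossing makes the two maxima `u h0` and `l (h0 + 1)`; left of the crossing `u`
    -- dominates the first, right of it `l` dominates the second.
    rw [max_eq_right h1, max_eq_left h2]
    rcases le_or_gt h h0 with hle | hgt
    · exact (min_le_left _ _).trans ((hu h h0 hi hle hh0j.le).trans (le_max_right _ _))
    · exact (min_le_right _ _).trans
        ((hl (h0 + 1) h (by omega) (by omega) hj).trans (le_max_left _ _))
end

section
/- Let n ≥ 1, m ≥ 1, let c(1),…,c(n) be strictly positive reals, d(1),…,d(n−1) be nonnegative reals with L := ∑_{h=1}^{n−1} d(h) > 0, and set δ = (max_{1≤i≤n} c(i))/L. Let α ≥ 1 and let c' satisfy 0 ≤ c'(i) ≤ α·c(i) for every i. Let T(r,i) ≥ 0 satisfy ∑_{r=1}^{m} T(r,i) ≥ c(i) for every module i; for each robot r let σ(r) ∈ {0,…,n} be such that T(r,i) = 0 whenever i > σ(r), with σ(1) ≤ … ≤ σ(m). Let M be a real with M ≥ 2·L and, for every r, M ≥ ∑_{i=1}^{n} T(r,i) + 2·∑_{h=1}^{σ(r)−1} d(h). Then f_{c'}(1,n,m) ≤ α·(1 + δ/2)·M. (Theorem of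 Section 5: given an α-approximation algorithm for the TSP, the resulting integer solution for the modular mTSP is within a factor α·(1 + δ/2) of the optimal makespan; with Christofides' α = 3/2 this gives the (3/2)·(1 + δ/2)-approximation of Corollary 1.) -/
/-- The least `e` such that the coverage times of the modules `e + 1, …, n` add up to at most the
total capacity `W` of the robots `r + 1, …, m`. The junk value `0` of `sInf ∅` never occurs for
nonnegative `W`, as `e = n` qualifies. -/
noncomputable def splitPoint (c W : ℕ → ℝ) (n m r : ℕ) : ℕ :=
  sInf {e : ℕ | ∑ i ∈ Finset.Icc (e + 1) n, c i ≤ ∑ s ∈ Finset.Icc (r + 1) m, W s}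

section
variable {c W : ℕ → ℝ} {n m : ℕ}

lemma splitPoint_le {r e : ℕ}
    (h : ∑ i ∈ Finset.Icc (e + 1) n, c i ≤ ∑ s ∈ Finset.Icc (r + 1) m, W s) :
    splitPoint c W n m r ≤ e :=
  Nat.sInf_le h

lemma sum_capacity_nonneg (hW : ∀ r ∈ Finset.Icc 1 m, 0 ≤ W r) (r : ℕ) :
    0 ≤ ∑ s ∈ Finset.Icc (r + 1) m, W s :=
  Finset.sum_nonneg fun s hs => hW s (by simp only [Finset.mem_Icc] at hs ⊢; omega)

lemma splitPoint_spec (hW : ∀ r ∈ Finset.Icc 1 m, 0 ≤ W r) (r : ℕ) :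
    ∑ i ∈ Finset.Icc (splitPoint c W n m r + 1) n, c i ≤ ∑ s ∈ Finset.Icc (r + 1) m, W s :=
  Nat.sInf_mem (s := {e : ℕ | ∑ i ∈ Finset.Icc (e + 1) n, c i ≤ ∑ s ∈ Finset.Icc (r + 1) m, W s})
    ⟨n, by simpa using sum_capacity_nonneg hW r⟩

lemma splitPoint_le_n (hW : ∀ r ∈ Finset.Icc 1 m, 0 ≤ W r) (r : ℕ) :
    splitPoint c W n m r ≤ n :=
  splitPoint_le (by simpa using sum_capacity_nonneg hW r)

lemma splitPoint_mono (hW : ∀ r ∈ Finset.Icc 1 m, 0 ≤ W r) :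
    Monotone (splitPoint c W n m) := by
  intro r s hrs
  refine splitPoint_le ((splitPoint_spec hW s).trans ?_)
  refine Finset.sum_le_sum_of_subset_of_nonneg (Finset.Icc_subset_Icc (by omega) le_rfl) ?_
  intro t ht _
  exact hW t (by simp only [Finset.mem_Icc] at ht ⊢; omega)

/-- No capacity is left beyond the last robot, so by positivity of `c` no module may be left. -/
lemma splitPoint_last (hc : ∀ i ∈ Finset.Icc 1 n, 0 < c i)
    (hW : ∀ r ∈ Finset.Icc 1 m, 0 ≤ W r) : splitPoint c W n m m = n := by
  refine le_antisymm (splitPoint_le_n hW m) ?_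
  by_contra! hlt
  have h := splitPoint_spec (c := c) (n := n) hW m
  rw [Finset.Icc_eq_empty (a := m + 1) (by omega), Finset.sum_empty] at h
  refine absurd h (not_le.mpr (Finset.sum_pos ?_ (Finset.nonempty_Icc.mpr hlt)))
  intro i hi
  exact hc i (by simp only [Finset.mem_Icc] at hi ⊢; omega)

/-- The interval of robot `r` exceeds its capacity by at most one module: without its last module
it would fit, by minimality of the split point. -/
lemma sum_interval_le (hW : ∀ r ∈ Finset.Icc 1 m, 0 ≤ W r) {K : ℝ}
    (hK : ∀ i ∈ Finset.Icc 1 n, c i ≤ K) {r : ℕ} (hr : r ∈ Finset.Icc 1 m)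
    (hlt : splitPoint c W n m (r - 1) < splitPoint c W n m r) :
    ∑ i ∈ Finset.Icc (splitPoint c W n m (r - 1) + 1) (splitPoint c W n m r), c i ≤ W r + K := by
  have hspec := splitPoint_spec (c := c) (n := n) hW (r - 1)
  have hen := splitPoint_le_n (c := c) (n := n) hW r
  have hmin : ∀ e < splitPoint c W n m r,
      ∑ s ∈ Finset.Icc (r + 1) m, W s < ∑ i ∈ Finset.Icc (e + 1) n, c i := by
    intro e he
    by_contra! h
    exact absurd (splitPoint_le h) (not_le.mpr he)
  generalize splitPoint c W n m (r - 1) = a at *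
  generalize splitPoint c W n m r = b at *
  rw [Finset.mem_Icc] at hr
  have hb := hmin (b - 1) (by omega)
  rw [show b - 1 + 1 = b by omega] at hb
  rw [show r - 1 + 1 = r by omega] at hspec
  have hWr : ∑ s ∈ Finset.Icc r m, W s = W r + ∑ s ∈ Finset.Icc (r + 1) m, W s := by
    simp only [← Finset.Ico_add_one_right_eq_Icc]
    exact Finset.sum_eq_sum_Ico_succ_bot (by omega) _
  have hcb : ∑ i ∈ Finset.Icc b n, c i = c b + ∑ i ∈ Finset.Icc (b + 1) n, c i := by
    simp only [← Finset.Ico_add_one_right_eq_Icc]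
    exact Finset.sum_eq_sum_Ico_succ_bot (by omega) _
  have hsplit : ∑ i ∈ Finset.Icc (a + 1) n, c i
      = ∑ i ∈ Finset.Icc (a + 1) b, c i + ∑ i ∈ Finset.Icc (b + 1) n, c i := by
    simp only [← Finset.Ico_add_one_right_eq_Icc]
    exact (Finset.sum_Ico_consecutive _ (by omega) (by omega)).symm
  have := hK b (by rw [Finset.mem_Icc]; omega)
  linarith

end

/-- If robots `1, …, r` do not reach the modules beyond `t`, these fit into the capacity of the
robots `r + 1, …, m`. The case `t = σ r` gives `e r ≤ σ r`, and `r = t = 0` gives `e 0 = 0`. -/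
lemma sum_beyond_le {n m : ℕ} {c : ℕ → ℝ} {T : ℕ → ℕ → ℝ}
    (hT : ∀ r ∈ Finset.Icc 1 m, ∀ i ∈ Finset.Icc 1 n, 0 ≤ T r i)
    (hcov : ∀ i ∈ Finset.Icc 1 n, c i ≤ ∑ r ∈ Finset.Icc 1 m, T r i)
    (r t : ℕ) (h0 : ∀ s ∈ Finset.Icc 1 m, s ≤ r → ∀ i, t < i → T s i = 0) :
    ∑ i ∈ Finset.Icc (t + 1) n, c i
      ≤ ∑ s ∈ Finset.Icc (r + 1) m, ∑ i ∈ Finset.Icc 1 n, T s i := by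
  calc ∑ i ∈ Finset.Icc (t + 1) n, c i
      ≤ ∑ i ∈ Finset.Icc (t + 1) n, ∑ s ∈ Finset.Icc (r + 1) m, T s i := by
        refine Finset.sum_le_sum fun i hi => ?_
        rw [Finset.mem_Icc] at hi
        refine (hcov i (by rw [Finset.mem_Icc]; omega)).trans (le_of_eq ?_)
        symm
        refine Finset.sum_subset (Finset.Icc_subset_Icc (by omega) le_rfl) fun s hs hs' => ?_
        refine h0 s hs ?_ i (by omega)
        simp only [Finset.mem_Icc] at hs hs'
        omega
    _ = ∑ s ∈ Finset.Icc (r + 1) m, ∑ i ∈ Finset.Icc (t + 1) n, T s i := Finset.sum_comm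
    _ ≤ _ := by
        refine Finset.sum_le_sum fun s hs => ?_
        refine Finset.sum_le_sum_of_subset_of_nonneg
          (Finset.Icc_subset_Icc (by omega) le_rfl) fun i hi _ => ?_
        exact hT s (by simp only [Finset.mem_Icc] at hs ⊢; omega) i hi

/-- Approximation theorem (Section 5 / Corollary 1): given an `α`-approximation
algorithm for the TSP producing coverage times `c'` with `c' i ≤ α * c i`, the
best integer solution computed with `c'` has makespan within a factor
`α * (1 + δ/2)` of the optimal makespan `M`, where
`δ = (max_i c i) / (∑ h d h)`. -/
theorem approx_factor_modular_mTSP (n m : ℕ) (hn : 1 ≤ n) (hm : 1 ≤ m)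
    (c c' d : ℕ → ℝ) (α : ℝ) (hα : 1 ≤ α)
    (hc : ∀ i ∈ Finset.Icc 1 n, 0 < c i)
    (hd : ∀ h ∈ Finset.Icc 1 (n - 1), 0 ≤ d h)
    (hL : 0 < ∑ h ∈ Finset.Icc 1 (n - 1), d h)
    (hc' : ∀ i ∈ Finset.Icc 1 n, 0 ≤ c' i ∧ c' i ≤ α * c i)
    (T : ℕ → ℕ → ℝ)
    (hT : ∀ r ∈ Finset.Icc 1 m, ∀ i ∈ Finset.Icc 1 n, 0 ≤ T r i)
    (hcov : ∀ i ∈ Finset.Icc 1 n, c i ≤ ∑ r ∈ Finset.Icc 1 m, T r i)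
    (σ : ℕ → ℕ)
    (hσle : ∀ r ∈ Finset.Icc 1 m, σ r ≤ n)
    (hσzero : ∀ r ∈ Finset.Icc 1 m, ∀ i, σ r < i → T r i = 0)
    (hσmono : ∀ r r', 1 ≤ r → r ≤ r' → r' ≤ m → σ r ≤ σ r')
    (M : ℝ)
    (hM2L : 2 * ∑ h ∈ Finset.Icc 1 (n - 1), d h ≤ M)
    (hM : ∀ r ∈ Finset.Icc 1 m,
      (∑ i ∈ Finset.Icc 1 n, T r i) + 2 * ∑ h ∈ Finset.Icc 1 (σ r - 1), d h ≤ M) :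
    f c' d 1 n m ≤
      α * (1 + ((Finset.Icc 1 n).sup' (Finset.nonempty_Icc.mpr hn) c /
        (∑ h ∈ Finset.Icc 1 (n - 1), d h)) / 2) * M := by
  set L := ∑ h ∈ Finset.Icc 1 (n - 1), d h with hLdef
  set K := (Finset.Icc 1 n).sup' (Finset.nonempty_Icc.mpr hn) c with hKdef
  have hK : ∀ i ∈ Finset.Icc 1 n, c i ≤ K := fun i hi => Finset.le_sup' c hi
  have hKpos : 0 < K :=
    (hc 1 (Finset.mem_Icc.mpr ⟨le_rfl, hn⟩)).trans_le (hK 1 (Finset.mem_Icc.mpr ⟨le_rfl, hn⟩))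
  have hM0 : 0 ≤ M := by linarith
  have hbound : α * (M + K) ≤ α * (1 + K / L / 2) * M := by
    have h1 : K ≤ K / L / 2 * M := by
      calc K = K / L / 2 * (2 * L) := by field_simp
        _ ≤ K / L / 2 * M := by gcongr
    rw [mul_assoc]
    refine mul_le_mul_of_nonneg_left ?_ (by linarith)
    linarith
  refine le_trans ?_ hbound
  let W : ℕ → ℝ := fun r => ∑ i ∈ Finset.Icc 1 n, T r i
  have hW : ∀ r ∈ Finset.Icc 1 m, 0 ≤ W r := fun r hr => Finset.sum_nonneg (hT r hr)
  have he0 : splitPoint c W n m 0 = 0 := by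
    refine Nat.le_zero.mp (splitPoint_le (sum_beyond_le hT hcov 0 0 fun s hs hs0 => ?_))
    rw [Finset.mem_Icc] at hs
    omega
  have heσ : ∀ r ∈ Finset.Icc 1 m, splitPoint c W n m r ≤ σ r := by
    intro r hr
    refine splitPoint_le (sum_beyond_le hT hcov r (σ r) fun s hs hsr i hi => ?_)
    rw [Finset.mem_Icc] at hr
    have hs1 := Finset.mem_Icc.mp hs
    exact hσzero s hs i ((hσmono s r hs1.1 hsr hr.2).trans_lt hi)
  have hmk : intMakespan c' d m (splitPoint c W n m) ≤ α * (M + K) := by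
    have hnn : 0 ≤ α * (M + K) := mul_nonneg (by linarith) (by linarith)
    refine (Finset.fold_max_le _).mpr ⟨hnn, fun r hr => ?_⟩
    unfold tourCost
    split_ifs with hlt
    · have hcover := sum_interval_le hW hK hr hlt
      have hen := splitPoint_le_n (c := c) (n := n) hW r
      have hcc' : ∑ h ∈ Finset.Icc (splitPoint c W n m (r - 1) + 1) (splitPoint c W n m r), c' h
          ≤ α * ∑ h ∈ Finset.Icc (splitPoint c W n m (r - 1) + 1) (splitPoint c W n m r), c h := by
        rw [Finset.mul_sum]
        refine Finset.sum_le_sum fun i hi => (hc' i ?_).2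
        simp only [Finset.mem_Icc] at hi ⊢
        omega
      have hσn := hσle r hr
      have heσr := heσ r hr
      have hD : ∑ h ∈ Finset.Icc 1 (splitPoint c W n m r - 1), d h
          ≤ ∑ h ∈ Finset.Icc 1 (σ r - 1), d h := by
        refine Finset.sum_le_sum_of_subset_of_nonneg
          (Finset.Icc_subset_Icc le_rfl (by omega)) fun h hh _ => hd h ?_
        simp only [Finset.mem_Icc] at hh ⊢
        omega
      have hD0 : 0 ≤ ∑ h ∈ Finset.Icc 1 (σ r - 1), d h := by
        refine Finset.sum_nonneg fun h hh => hd h ?_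
        simp only [Finset.mem_Icc] at hh ⊢
        omega
      have hMr : W r + 2 * ∑ h ∈ Finset.Icc 1 (σ r - 1), d h ≤ M := hM r hr
      have h1 := mul_le_mul_of_nonneg_left hcover (by linarith : (0 : ℝ) ≤ α)
      have h2 := mul_le_mul_of_nonneg_left hMr (by linarith : (0 : ℝ) ≤ α)
      -- the travel time is not scaled by the TSP approximation, but `1 ≤ α` absorbs it
      have h3 := mul_nonneg (sub_nonneg.mpr hα) hD0
      linarith
    · exact hnn
  refine le_trans ?_ hmk
  refine csInf_le ⟨0, ?_⟩ ⟨splitPoint c W n m, splitPoint_mono hW, he0,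
    splitPoint_last hc hW, rfl⟩
  rintro x ⟨e, -, -, -, rfl⟩
  exact (Finset.le_fold_max _).mpr (Or.inl le_rfl)
end
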